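/- arXiv:2602.07368 — 3 statements merged into one kernel-verified Lean document; each statement's English description precedes it below -/
import Mathlib

section
/- Let (B, A, i, e, l) be a cleft extension of abelian categories in which A and B have arbitrary coproducts, and let σ : B₁ → B₂ be a morphism in B. If i preserves coproducts and the class D_{l(σ)} is closed under coproducts, then D_σ is closed under coproducts; conversely, if e preserves coproducts and D_σ is closed under coproducts, then D_{l(σ)} is closed under coproducts. -/
open CategoryTheory Limits

universe v u₁ u₂

/-- For a morphism `σ : X ⟶ Y` in a category `C`, `DClass σ` is the class of objects `L`
such that `Hom_C(σ, L) : Hom_C(Y, L) → Hom_C(X, L)` is surjective. -/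
def DClass {C : Type u₁} [Category.{v} C] {X Y : C} (σ : X ⟶ Y) (L : C) : Prop :=
  Function.Surjective (fun g : Y ⟶ L => σ ≫ g)

/-- A class of objects of `C` is closed under coproducts if it contains the coproduct of any
family of its members. -/
def ClosedUnderCoproducts {C : Type u₁} [Category.{v} C] [HasCoproducts.{v} C]
    (P : C → Prop) : Prop :=
  ∀ (I : Type v) (f : I → C), (∀ j, P (f j)) → P (∐ f)

/-! The adjunction `l ⊣ e` says that `D_{l(σ)}` is the preimage of `D_σ` under `e`; since
`e ∘ i ≅ Id`, it follows that `D_σ` is the preimage of `D_{l(σ)}` under `i`. Both implications are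
then the fact that the preimage of an isomorphism-closed, coproduct-closed class under a
coproduct-preserving functor is closed under coproducts. -/

section DClass

variable {C D : Type*} [Category* C] [Category* D]

instance isClosedUnderIsomorphisms_dClass {X Y : C} (σ : X ⟶ Y) :
    ObjectProperty.IsClosedUnderIsomorphisms (DClass σ) where
  of_iso {L M} a hL g := by
    obtain ⟨k, hk : σ ≫ k = g ≫ a.inv⟩ := hL (g ≫ a.inv)
    exact ⟨k ≫ a.hom, by simpa using ((Iso.comp_inv_eq a).1 hk.symm).symm⟩

theorem dClass_map_iff {F : C ⥤ D} {G : D ⥤ C} (adj : F ⊣ G) {X Y : C} (σ : X ⟶ Y) (L : D) :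
    DClass (F.map σ) L ↔ DClass σ (G.obj L) := by
  have precomp_naturality :
      adj.homEquiv X L ∘ (fun g => F.map σ ≫ g) = (fun g => σ ≫ g) ∘ adj.homEquiv Y L :=
    funext (adj.homEquiv_naturality_left σ)
  unfold DClass
  rw [← (adj.homEquiv X L).comp_surjective, precomp_naturality,
    (adj.homEquiv Y L).surjective_comp]

theorem dClass_map_eq_inverseImage {F : C ⥤ D} {G : D ⥤ C} (adj : F ⊣ G) {X Y : C}
    (σ : X ⟶ Y) : DClass (F.map σ) = ObjectProperty.inverseImage (DClass σ) G :=
  funext fun L => propext (dClass_map_iff adj σ L)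

theorem dClass_eq_inverseImage_dClass_map {F : C ⥤ D} {G : D ⥤ C} (adj : F ⊣ G) {S : C ⥤ D}
    (η : S ⋙ G ≅ 𝟭 C) {X Y : C} (σ : X ⟶ Y) :
    DClass σ = ObjectProperty.inverseImage (DClass (F.map σ)) S := by
  funext L
  rw [dClass_map_eq_inverseImage adj]
  exact propext (ObjectProperty.prop_iff_of_iso (DClass σ) (η.app L).symm)

end DClass

theorem ClosedUnderCoproducts.inverseImage {C : Type u₁} {D : Type u₂} [Category.{v} C]
    [Category.{v} D] [HasCoproducts.{v} C] [HasCoproducts.{v} D] {P : ObjectProperty D}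
    [P.IsClosedUnderIsomorphisms] (hP : ClosedUnderCoproducts P) (F : C ⥤ D)
    (hF : ∀ J : Type v, PreservesColimitsOfShape (Discrete J) F) :
    ClosedUnderCoproducts (P.inverseImage F) := by
  intro I f hf
  have := hF I
  exact P.prop_of_iso (PreservesCoproduct.iso F f).symm (hP I (fun j => F.obj (f j)) hf)

theorem stmt6_general {A : Type u₁} {B : Type u₂} [Category.{v} A] [Category.{v} B]
    [HasCoproducts.{v} A] [HasCoproducts.{v} B]
    (i : B ⥤ A) (e : A ⥤ B) (l : B ⥤ A) (adj : l ⊣ e) (η : i ⋙ e ≅ 𝟭 B)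
    {B₁ B₂ : B} (σ : B₁ ⟶ B₂) :
    ((∀ J : Type v, PreservesColimitsOfShape (Discrete J) i) →
      ClosedUnderCoproducts (DClass (l.map σ)) → ClosedUnderCoproducts (DClass σ)) ∧
    ((∀ J : Type v, PreservesColimitsOfShape (Discrete J) e) →
      ClosedUnderCoproducts (DClass σ) → ClosedUnderCoproducts (DClass (l.map σ))) := by
  constructor
  · intro hi hlσ
    rw [dClass_eq_inverseImage_dClass_map adj η]
    exact hlσ.inverseImage i hi
  · intro he hσ
    rw [dClass_map_eq_inverseImage adj]
    exact hσ.inverseImage e he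

/-- Let `(B, A, i, e, l)` be a cleft extension of abelian categories with
arbitrary coproducts and `σ : B₁ ⟶ B₂` a morphism in `B`. If `i` preserves coproducts and
`D_{l(σ)}` is closed under coproducts, then so is `D_σ`; conversely, if `e` preserves coproducts
and `D_σ` is closed under coproducts, then so is `D_{l(σ)}`. -/
theorem stmt6 {A : Type u₁} {B : Type u₂} [Category.{v} A] [Category.{v} B]
    [Abelian A] [Abelian B] [EnoughProjectives A] [EnoughProjectives B]
    [HasCoproducts.{v} A] [HasCoproducts.{v} B]
    (i : B ⥤ A) (e : A ⥤ B) (l : B ⥤ A) [e.Faithful]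
    [PreservesFiniteLimits e] [PreservesFiniteColimits e]
    (adj : l ⊣ e) (η : i ⋙ e ≅ 𝟭 B)
    {B₁ B₂ : B} (σ : B₁ ⟶ B₂) :
    ((∀ J : Type v, PreservesColimitsOfShape (Discrete J) i) →
      ClosedUnderCoproducts (DClass (l.map σ)) → ClosedUnderCoproducts (DClass σ)) ∧
    ((∀ J : Type v, PreservesColimitsOfShape (Discrete J) e) →
      ClosedUnderCoproducts (DClass σ) → ClosedUnderCoproducts (DClass (l.map σ))) :=
  stmt6_general i e l adj η σ
end

section
/- Let (B, A, i, e, l) be a cleft extension of abelian categories in which A and B have arbitrary coproducts and both i and e preserve coproducts, and let P₁ →σ P₀ → B → 0 be a projective presentation of B in B. Then l(B) is a partial silting object of A with respect to l(σ) if and only if B is a partial silting object of B with respect to σ and F(B) ∈ D_σ, where F(B) := e(ker(μ_{i(B)})) and μ is the counit of (l, e). -/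
open CategoryTheory Limits

universe v u₁ u₂

/-- Given a morphism `σ` occurring in a projective presentation `P₁ ⟶ P₀ ⟶ X ⟶ 0`, the object
`X` is partial silting with respect to `σ` if `X ∈ D_σ` and `D_σ` is closed under coproducts. -/
def IsPartialSilting {C : Type u₁} [Category.{v} C] [HasCoproducts.{v} C]
    {P₁ P₀ : C} (σ : P₁ ⟶ P₀) (X : C) : Prop :=
  DClass σ X ∧ ClosedUnderCoproducts (DClass σ)

/-!
By adjunction `D_{l(σ)}` is the preimage of `D_σ` under `e`. As `e` preserves coproducts and hits
every object up to isomorphism, one class is closed under coproducts exactly when the other is.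
For `X` with `e(X) ≅ Bo`, the triangle identity splits `e(μ_X) : e(l(e(X))) ⟶ e(X)`, so that
`e(l(Bo)) ≅ Bo ⊕ e(ker μ_X)`; since `D_σ` is closed under finite direct sums and summands,
`l(Bo) ∈ D_{l(σ)}` if and only if both summands lie in `D_σ`.
-/

namespace DClass

instance isStableUnderRetracts {C : Type*} [Category* C] {P Q : C} (σ : P ⟶ Q) :
    ObjectProperty.IsStableUnderRetracts (DClass σ) where
  of_retract r hL f := by
    obtain ⟨g, hg : σ ≫ g = f ≫ r.i⟩ := hL (f ≫ r.i)
    exact ⟨g ≫ r.r, by simp [reassoc_of% hg]⟩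

theorem pt_iff_of_isBilimit {C : Type*} [Category* C] [HasZeroMorphisms C] {P Q : C}
    (σ : P ⟶ Q) {X Y : C} {b : BinaryBicone X Y} (hb : b.IsBilimit) :
    DClass σ b.pt ↔ DClass σ X ∧ DClass σ Y := by
  constructor
  · exact fun h ↦ ⟨ObjectProperty.prop_of_retract _ ⟨b.inl, b.fst, b.inl_fst⟩ h,
      ObjectProperty.prop_of_retract _ ⟨b.inr, b.snd, b.inr_snd⟩ h⟩
  · rintro ⟨hX, hY⟩ f
    obtain ⟨g₁, hg₁ : σ ≫ g₁ = f ≫ b.fst⟩ := hX (f ≫ b.fst)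
    obtain ⟨g₂, hg₂ : σ ≫ g₂ = f ≫ b.snd⟩ := hY (f ≫ b.snd)
    obtain ⟨g, hg_fst, hg_snd⟩ : ∃ g : Q ⟶ b.pt, g ≫ b.fst = g₁ ∧ g ≫ b.snd = g₂ :=
      ⟨_, (BinaryFan.IsLimit.lift' hb.isLimit g₁ g₂).2⟩
    have comp_fst : (σ ≫ g) ≫ b.fst = f ≫ b.fst := by rw [Category.assoc, hg_fst, hg₁]
    have comp_snd : (σ ≫ g) ≫ b.snd = f ≫ b.snd := by rw [Category.assoc, hg_snd, hg₂]
    exact ⟨g, BinaryFan.IsLimit.hom_ext hb.isLimit comp_fst comp_snd⟩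

theorem iff_kernel_and_of_isSplitEpi {C : Type*} [Category* C] [Preadditive C] {P Q : C}
    (σ : P ⟶ Q) {X Y : C} (f : X ⟶ Y) [IsSplitEpi f] [HasKernel f] :
    DClass σ X ↔ DClass σ (kernel f) ∧ DClass σ Y :=
  pt_iff_of_isBilimit σ (isBilimitBinaryBiconeOfIsSplitEpiOfKernel (kernelIsKernel f))

section Adjunction

variable {A B : Type*} [Category* A] [Category* B] {e : A ⥤ B} {l : B ⥤ A} {P Q : B}

theorem map_leftAdjoint_eq_inverseImage (adj : l ⊣ e) (σ : P ⟶ Q) :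
    DClass (l.map σ) = ObjectProperty.inverseImage (DClass σ) e := by
  ext L
  have precomp_eq : (adj.homEquiv P L) ∘ (fun g ↦ l.map σ ≫ g) =
      (fun g ↦ σ ≫ g) ∘ (adj.homEquiv Q L) :=
    funext (adj.homEquiv_naturality_left σ)
  rw [DClass, ← (adj.homEquiv P L).comp_surjective, precomp_eq, Equiv.surjective_comp]
  rfl

theorem obj_leftAdjoint_obj_iff [HasZeroMorphisms A] [Preadditive B] (adj : l ⊣ e)
    (σ : P ⟶ Q) (X : A) [HasKernel (adj.counit.app X)] :
    DClass σ (e.obj (l.obj (e.obj X))) ↔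
      DClass σ (e.obj (kernel (adj.counit.app X))) ∧ DClass σ (e.obj X) := by
  have : e.IsRightAdjoint := adj.isRightAdjoint
  have : IsSplitEpi (e.map (adj.counit.app X)) :=
    .mk' ⟨adj.unit.app (e.obj X), adj.right_triangle_components X⟩
  rw [ObjectProperty.prop_iff_of_iso (DClass σ) (PreservesKernel.iso e (adj.counit.app X))]
  exact iff_kernel_and_of_isSplitEpi σ (e.map (adj.counit.app X))

end Adjunction

end DClass

theorem closedUnderCoproducts_inverseImage_iff {A : Type u₁} {B : Type u₂}
    [Category.{v} A] [Category.{v} B] [HasCoproducts.{v} A] [HasCoproducts.{v} B]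
    (e : A ⥤ B) [e.EssSurj] [∀ J : Type v, PreservesColimitsOfShape (Discrete J) e]
    (P : ObjectProperty B) [P.IsClosedUnderIsomorphisms] :
    ClosedUnderCoproducts (P.inverseImage e) ↔ ClosedUnderCoproducts P := by
  constructor
  · intro h I f hf
    let φ (j : I) : e.obj (e.objPreimage (f j)) ≅ f j := e.objObjPreimageIso (f j)
    have map_sigma_mem : P (e.obj (∐ fun j ↦ e.objPreimage (f j))) :=
      h I _ fun j ↦ P.prop_of_iso (φ j).symm (hf j)
    exact P.prop_of_iso (PreservesCoproduct.iso e _ ≪≫ Sigma.mapIso φ) map_sigma_mem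
  · exact fun h I f hf ↦ P.prop_of_iso (PreservesCoproduct.iso e f).symm (h I _ hf)

theorem stmt7_general {A : Type u₁} {B : Type u₂} [Category.{v} A] [Category.{v} B]
    [HasZeroMorphisms A] [Preadditive B] [HasCoproducts.{v} A] [HasCoproducts.{v} B]
    {e : A ⥤ B} {l : B ⥤ A} [e.EssSurj]
    [∀ J : Type v, PreservesColimitsOfShape (Discrete J) e] (adj : l ⊣ e)
    {P₁ P₀ Bo : B} (σ : P₁ ⟶ P₀) {X : A} (φ : e.obj X ≅ Bo) [HasKernel (adj.counit.app X)] :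
    IsPartialSilting (l.map σ) (l.obj Bo) ↔
      IsPartialSilting σ Bo ∧ DClass σ (e.obj (kernel (adj.counit.app X))) := by
  have mem_iff : DClass σ (e.obj (l.obj Bo)) ↔
      DClass σ (e.obj (kernel (adj.counit.app X))) ∧ DClass σ Bo := by
    rw [← ObjectProperty.prop_iff_of_iso (DClass σ) (e.mapIso (l.mapIso φ)),
      ← ObjectProperty.prop_iff_of_iso (DClass σ) φ]
    exact DClass.obj_leftAdjoint_obj_iff adj σ X
  rw [IsPartialSilting, IsPartialSilting, DClass.map_leftAdjoint_eq_inverseImage adj,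
    closedUnderCoproducts_inverseImage_iff, ObjectProperty.prop_inverseImage_iff, mem_iff]
  tauto

/-- Let `(B, A, i, e, l)` be a cleft extension of abelian categories with
arbitrary coproducts in which `i` and `e` preserve coproducts, and let
`P₁ ⟶σ P₀ ⟶π Bo ⟶ 0` be a projective presentation of `Bo` in `B`. Then `l(Bo)` is partial
silting in `A` with respect to `l(σ)` if and only if `Bo` is partial silting in `B` with respect
to `σ` and `F(Bo) ∈ D_σ`, where `F(Bo) := e(ker(μ_{i(Bo)}))` and `μ` is the counit of `(l, e)`. -/
theorem stmt7 {A : Type u₁} {B : Type u₂} [Category.{v} A] [Category.{v} B]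
    [Abelian A] [Abelian B] [EnoughProjectives A] [EnoughProjectives B]
    [HasCoproducts.{v} A] [HasCoproducts.{v} B]
    (i : B ⥤ A) (e : A ⥤ B) (l : B ⥤ A) [e.Faithful]
    [PreservesFiniteLimits e] [PreservesFiniteColimits e]
    [∀ J : Type v, PreservesColimitsOfShape (Discrete J) i]
    [∀ J : Type v, PreservesColimitsOfShape (Discrete J) e]
    (adj : l ⊣ e) (η : i ⋙ e ≅ 𝟭 B)
    {P₁ P₀ Bo : B} (σ : P₁ ⟶ P₀) (π : P₀ ⟶ Bo)
    (hP₁ : Projective P₁) (hP₀ : Projective P₀) [Epi π]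
    (w : σ ≫ π = 0) (hexact : (ShortComplex.mk σ π w).Exact) :
    IsPartialSilting (l.map σ) (l.obj Bo) ↔
      IsPartialSilting σ Bo ∧ DClass σ (e.obj (kernel (adj.counit.app (i.obj Bo)))) := by
  have : e.EssSurj := ⟨fun Y ↦ ⟨i.obj Y, ⟨η.app Y⟩⟩⟩
  exact stmt7_general adj σ (η.app Bo)
end

section
/- Let (B, A, i, e, l) be a cleft extension of abelian categories in which A and B have arbitrary coproducts and both i and e preserve coproducts, and let P₁ →σ P₀ → B → 0 be a projective presentation of B in B. Then l(B) is a silting object of A with respect to l(σ) if and only if B is a silting object of B with respect to σ and F(B) ∈ Gen(B), where F(B) := e(ker(μ_{i(B)})) and μ is the counit of (l, e). -/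
open CategoryTheory Limits

universe v u₁ u₂

/-- `Gen X` is the class of epimorphic images of coproducts of copies of `X`. -/
def Gen {C : Type u₁} [Category.{v} C] [HasCoproducts.{v} C] (X L : C) : Prop :=
  ∃ (I : Type v) (p : (∐ fun _ : I => X) ⟶ L), Epi p

/-- Given a morphism `σ` occurring in a projective presentation `P₁ ⟶ P₀ ⟶ X ⟶ 0`, the object
`X` is silting with respect to `σ` if `Gen X = D_σ`. -/
def IsSilting {C : Type u₁} [Category.{v} C] [HasCoproducts.{v} C]
    {P₁ P₀ : C} (σ : P₁ ⟶ P₀) (X : C) : Prop :=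
  ∀ L : C, Gen X L ↔ DClass σ L

/-!
The adjunction gives `D_{l(σ)} = e⁻¹(D_σ)`, so everything reduces to comparing `Gen (l B)` with
`e⁻¹(Gen B)`. Since `e` is faithful, `e⁻¹(Gen B) ⊆ Gen (l B)` always holds, and on the objects `i Y`
the two classes agree because `e ∘ i ≅ Id`; restricting `Gen (l B) = D_{l(σ)}` to such objects
yields `Gen B = D_σ`. Conversely `Gen (l B) ⊆ e⁻¹(Gen B)` holds as soon as `e (l B) ∈ Gen B`. The
unit of the adjunction splits `e μ`, so `e (l B)` is the direct sum of `F(B)` and `B`, and this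
condition amounts to `F(B) ∈ Gen B`.
-/

section Gen

variable {C : Type u₁} [Category.{v} C] [HasCoproducts.{v} C]

theorem gen_iff_hom_ext {X L : C} :
    Gen X L ↔ ∀ ⦃Z : C⦄ (h h' : L ⟶ Z), (∀ g : X ⟶ L, g ≫ h = g ≫ h') → h = h' := by
  constructor
  · rintro ⟨I, p, _⟩ Z h h' heq
    rw [← cancel_epi p]
    refine Sigma.hom_ext _ _ fun j => ?_
    simpa only [Category.assoc] using heq (Sigma.ι (fun _ : I => X) j ≫ p)
  · intro hext
    refine ⟨X ⟶ L, Sigma.desc fun g => g, ⟨fun h h' heq => hext h h' fun g => ?_⟩⟩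
    simpa only [Sigma.ι_desc_assoc] using Sigma.ι (fun _ : X ⟶ L => X) g ≫= heq

theorem gen_of_epi {X L : C} (p : X ⟶ L) [Epi p] : Gen X L :=
  gen_iff_hom_ext.2 fun _ _ _ heq => (cancel_epi p).1 (heq p)

theorem Gen.trans {X Y L : C} (hXY : Gen X Y) (hYL : Gen Y L) : Gen X L := by
  rw [gen_iff_hom_ext] at *
  refine fun Z h h' heq => hYL h h' fun k => hXY _ _ fun g => ?_
  simpa only [Category.assoc] using heq (g ≫ k)

theorem Gen.congr_right {X L L' : C} (α : L ≅ L') : Gen X L ↔ Gen X L' :=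
  ⟨fun h => h.trans (gen_of_epi α.hom), fun h => h.trans (gen_of_epi α.inv)⟩

theorem Gen.of_splitting [Preadditive C] {X : C} {S : ShortComplex C} (s : S.Splitting)
    (h₁ : Gen X S.X₁) (h₃ : Gen X S.X₃) : Gen X S.X₂ := by
  rw [gen_iff_hom_ext] at *
  intro Z h h' heq
  have hf : S.f ≫ h = S.f ≫ h' :=
    h₁ _ _ fun g => by simpa only [Category.assoc] using heq (g ≫ S.f)
  have hs : s.s ≫ h = s.s ≫ h' :=
    h₃ _ _ fun g => by simpa only [Category.assoc] using heq (g ≫ s.s)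
  calc h = (s.r ≫ S.f + S.g ≫ s.s) ≫ h := by rw [s.id, Category.id_comp]
    _ = (s.r ≫ S.f + S.g ≫ s.s) ≫ h' := by
      simp only [Preadditive.add_comp, Category.assoc, hf, hs]
    _ = h' := by rw [s.id, Category.id_comp]

theorem Gen.map {D : Type u₂} [Category.{v} D] [HasCoproducts.{v} D] (F : C ⥤ D)
    [F.PreservesEpimorphisms] [∀ J : Type v, PreservesColimitsOfShape (Discrete J) F] {X L : C} :
    Gen X L → Gen (F.obj X) (F.obj L) := by
  rintro ⟨I, p, _⟩
  exact ⟨I, sigmaComparison F (fun _ : I => X) ≫ F.map p, inferInstance⟩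

end Gen

section DClass

variable {C : Type u₁} [Category.{v} C] {X Y : C} {σ : X ⟶ Y}

theorem DClass.of_retract {L L' : C} (r : Retract L L') (hL' : DClass σ L') : DClass σ L := by
  intro f
  obtain ⟨g, hg : σ ≫ g = f ≫ r.i⟩ := hL' (f ≫ r.i)
  exact ⟨g ≫ r.r, by simp only [reassoc_of% hg, r.retract, Category.comp_id]⟩

theorem DClass.congr_right {L L' : C} (α : L ≅ L') : DClass σ L ↔ DClass σ L' :=
  ⟨.of_retract (.ofIso α.symm), .of_retract (.ofIso α)⟩

end DClass

section Adjunction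

variable {A : Type u₁} {B : Type u₂} [Category.{v} A] [Category.{v} B]
  {i : B ⥤ A} {e : A ⥤ B} {l : B ⥤ A}

theorem dClass_leftAdjoint_map_iff (adj : l ⊣ e) {P₁ P₀ : B} (σ : P₁ ⟶ P₀) (L : A) :
    DClass (l.map σ) L ↔ DClass σ (e.obj L) := by
  have hcomm : (fun g => σ ≫ g) ∘ adj.homEquiv P₀ L =
      adj.homEquiv P₁ L ∘ fun g => l.map σ ≫ g :=
    funext fun g => (adj.homEquiv_naturality_left σ g).symm
  rw [DClass, DClass, ← (adj.homEquiv P₀ L).surjective_comp, hcomm,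
    (adj.homEquiv P₁ L).comp_surjective]

variable [HasCoproducts.{v} A] [HasCoproducts.{v} B]

theorem Gen.leftAdjoint_obj (adj : l ⊣ e) [e.Faithful] {X : B} {L : A} (hL : Gen X (e.obj L)) :
    Gen (l.obj X) L := by
  rw [gen_iff_hom_ext] at *
  refine fun Z h h' heq => e.map_injective (hL _ _ fun g => ?_)
  simpa only [adj.homEquiv_naturality_right, Equiv.apply_symm_apply] using
    congrArg (adj.homEquiv _ _) (heq ((adj.homEquiv _ _).symm g))

theorem Gen.of_leftAdjoint_obj_section_obj (adj : l ⊣ e) (η : i ⋙ e ≅ 𝟭 B) {X Y : B}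
    (hY : Gen (l.obj X) (i.obj Y)) : Gen X Y := by
  rw [gen_iff_hom_ext] at *
  intro Z h h' heq
  have naturality (f : Y ⟶ Z) : e.map (i.map f) ≫ η.hom.app Z = η.hom.app Y ≫ f :=
    η.hom.naturality f
  have hi : i.map h = i.map h' := by
    refine hY _ _ fun g => (adj.homEquiv _ _).injective ?_
    rw [adj.homEquiv_naturality_right, adj.homEquiv_naturality_right,
      ← cancel_mono (η.hom.app Z), Category.assoc, Category.assoc, naturality, naturality]
    simpa only [Category.assoc] using heq (adj.homEquiv _ _ g ≫ η.hom.app Y)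
  have := Functor.Faithful.of_iso η.symm
  exact (i ⋙ e).map_injective (congrArg e.map hi)

theorem gen_leftAdjoint_obj_section_obj_iff (adj : l ⊣ e) [e.Faithful] (η : i ⋙ e ≅ 𝟭 B)
    (X Y : B) : Gen (l.obj X) (i.obj Y) ↔ Gen X Y :=
  ⟨.of_leftAdjoint_obj_section_obj adj η,
    fun hY => .leftAdjoint_obj adj ((Gen.congr_right (η.app Y)).2 hY)⟩

theorem gen_leftAdjoint_obj_iff_of_gen (adj : l ⊣ e) [e.Faithful] [e.PreservesEpimorphisms]
    [∀ J : Type v, PreservesColimitsOfShape (Discrete J) e] {X : B}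
    (hX : Gen X (e.obj (l.obj X))) (L : A) : Gen (l.obj X) L ↔ Gen X (e.obj L) :=
  ⟨fun hL => hX.trans (hL.map e), .leftAdjoint_obj adj⟩

theorem IsSilting.of_leftAdjoint (adj : l ⊣ e) [e.Faithful] (η : i ⋙ e ≅ 𝟭 B) {P₁ P₀ X : B}
    {σ : P₁ ⟶ P₀} (hX : IsSilting (l.map σ) (l.obj X)) : IsSilting σ X := fun Y =>
  calc Gen X Y ↔ Gen (l.obj X) (i.obj Y) := (gen_leftAdjoint_obj_section_obj_iff adj η X Y).symm
    _ ↔ DClass (l.map σ) (i.obj Y) := hX _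
    _ ↔ DClass σ (e.obj (i.obj Y)) := dClass_leftAdjoint_map_iff adj σ _
    _ ↔ DClass σ Y := DClass.congr_right (η.app Y)

theorem IsSilting.leftAdjoint (adj : l ⊣ e) [e.Faithful] [e.PreservesEpimorphisms]
    [∀ J : Type v, PreservesColimitsOfShape (Discrete J) e] {P₁ P₀ X : B} {σ : P₁ ⟶ P₀}
    (hX : IsSilting σ X) (hgen : Gen X (e.obj (l.obj X))) :
    IsSilting (l.map σ) (l.obj X) := fun L =>
  calc Gen (l.obj X) L ↔ Gen X (e.obj L) := gen_leftAdjoint_obj_iff_of_gen adj hgen L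
    _ ↔ DClass σ (e.obj L) := hX _
    _ ↔ DClass (l.map σ) L := (dClass_leftAdjoint_map_iff adj σ L).symm

end Adjunction

section CounitKernel

/-- The splitting of a short complex `S` in a preadditive category obtained from a section of
`S.g`, when `S.f` is a kernel of `S.g`; unlike `ShortComplex.Splitting.ofExactOfSection`, it does
not require the category to be balanced. -/
def splittingOfIsKernelOfSection {C : Type u₁} [Category.{v} C] [Preadditive C]
    (S : ShortComplex C) (hf : IsLimit (KernelFork.ofι S.f S.zero)) (s : S.X₃ ⟶ S.X₂)
    (hs : s ≫ S.g = 𝟙 S.X₃) : S.Splitting :=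
  have lift_f : hf.lift (KernelFork.ofι (𝟙 S.X₂ - S.g ≫ s) (by simp [hs])) ≫ S.f =
      𝟙 S.X₂ - S.g ≫ s := hf.fac _ WalkingParallelPair.zero
  { r := hf.lift (KernelFork.ofι (𝟙 S.X₂ - S.g ≫ s) (by simp [hs]))
    s := s
    f_r := Fork.IsLimit.hom_ext hf (by simp [lift_f])
    s_g := hs
    id := by rw [lift_f, sub_add_cancel] }

variable {A : Type u₁} {B : Type u₂} [Category.{v} A] [Category.{v} B] [HasZeroMorphisms A]
  [HasKernels A] [Preadditive B] {i : B ⥤ A} {e : A ⥤ B} {l : B ⥤ A}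

/-- The image under `e` of the sequence `ker μ_N ⟶ l (e N) ⟶ N`, where `μ` is the counit of
`l ⊣ e`, with the splitting given by the unit. -/
noncomputable def counitKernelSplitting (adj : l ⊣ e) [e.PreservesZeroMorphisms] (N : A) :
    ((ShortComplex.mk _ _ (kernel.condition (adj.counit.app N))).map e).Splitting :=
  have := adj.rightAdjoint_preservesLimits
  splittingOfIsKernelOfSection _
    (KernelFork.mapIsLimit _ (kernelIsKernel (adj.counit.app N)) e)
    (adj.unit.app (e.obj N)) (adj.right_triangle_components N)

theorem dClass_counit_kernel (adj : l ⊣ e) (η : i ⋙ e ≅ 𝟭 B) {P₁ P₀ X : B} {σ : P₁ ⟶ P₀}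
    (hX : DClass σ (e.obj (l.obj X))) :
    DClass σ (e.obj (kernel (adj.counit.app (i.obj X)))) := by
  have := adj.isRightAdjoint
  have split := counitKernelSplitting adj (i.obj X)
  refine .of_retract ⟨_, split.r, split.f_r⟩ ?_
  exact (DClass.congr_right (e.mapIso (l.mapIso (η.app X)))).2 hX

variable [HasCoproducts.{v} B]

theorem gen_obj_leftAdjoint_obj_of_gen_counit_kernel (adj : l ⊣ e) (η : i ⋙ e ≅ 𝟭 B) {X : B}
    (hX : Gen X (e.obj (kernel (adj.counit.app (i.obj X))))) : Gen X (e.obj (l.obj X)) := by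
  have := adj.isRightAdjoint
  have split := counitKernelSplitting adj (i.obj X)
  have hiX : Gen X (e.obj (i.obj X)) := gen_of_epi (η.inv.app X)
  exact (Gen.congr_right (e.mapIso (l.mapIso (η.app X)))).1 (.of_splitting split hX hiX)

variable [HasCoproducts.{v} A]

theorem stmt8_general (adj : l ⊣ e) [e.Faithful] [e.PreservesEpimorphisms]
    [∀ J : Type v, PreservesColimitsOfShape (Discrete J) e] (η : i ⋙ e ≅ 𝟭 B) {P₁ P₀ X : B}
    (σ : P₁ ⟶ P₀) :
    IsSilting (l.map σ) (l.obj X) ↔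
      IsSilting σ X ∧ Gen X (e.obj (kernel (adj.counit.app (i.obj X)))) := by
  constructor
  · intro hlX
    have hX : IsSilting σ X := hlX.of_leftAdjoint adj η
    have hD : DClass σ (e.obj (l.obj X)) :=
      (dClass_leftAdjoint_map_iff adj σ _).1 ((hlX _).1 (gen_of_epi (𝟙 _)))
    exact ⟨hX, (hX _).2 (dClass_counit_kernel adj η hD)⟩
  · rintro ⟨hX, hF⟩
    exact hX.leftAdjoint adj (gen_obj_leftAdjoint_obj_of_gen_counit_kernel adj η hF)

end CounitKernel

/-- Let `(B, A, i, e, l)` be a cleft extension of abelian categories with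
arbitrary coproducts in which `i` and `e` preserve coproducts, and let
`P₁ ⟶σ P₀ ⟶π Bo ⟶ 0` be a projective presentation of `Bo` in `B`. Then `l(Bo)` is silting in
`A` with respect to `l(σ)` if and only if `Bo` is silting in `B` with respect to `σ` and
`F(Bo) ∈ Gen(Bo)`, where `F(Bo) := e(ker(μ_{i(Bo)}))` and `μ` is the counit of `(l, e)`. -/
theorem stmt8 {A : Type u₁} {B : Type u₂} [Category.{v} A] [Category.{v} B]
    [Abelian A] [Abelian B] [EnoughProjectives A] [EnoughProjectives B]
    [HasCoproducts.{v} A] [HasCoproducts.{v} B]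
    (i : B ⥤ A) (e : A ⥤ B) (l : B ⥤ A) [e.Faithful]
    [PreservesFiniteLimits e] [PreservesFiniteColimits e]
    [∀ J : Type v, PreservesColimitsOfShape (Discrete J) i]
    [∀ J : Type v, PreservesColimitsOfShape (Discrete J) e]
    (adj : l ⊣ e) (η : i ⋙ e ≅ 𝟭 B)
    {P₁ P₀ Bo : B} (σ : P₁ ⟶ P₀) (π : P₀ ⟶ Bo)
    (hP₁ : Projective P₁) (hP₀ : Projective P₀) [Epi π]
    (w : σ ≫ π = 0) (hexact : (ShortComplex.mk σ π w).Exact) :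
    IsSilting (l.map σ) (l.obj Bo) ↔
      IsSilting σ Bo ∧ Gen Bo (e.obj (kernel (adj.counit.app (i.obj Bo)))) :=
  stmt8_general adj η σ
end
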